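/- Let n ≥ 4, let L be the permutation group induced by Sym(n) on ordered pairs of distinct elements of {1,…,n}, let (Γ,G) be a locally L pair, and let {x,y} be an edge of Γ. If G_{xy}^{[1]} ≠ 1, then n = 4 or n = 6 and G_{xy}^{[1]} is a 2-group. -/

import Mathlib

open MulAction Pointwise

/-- The set of ordered pairs of distinct elements of `{1,…,n}`. -/
abbrev OPairs (n : ℕ) : Type := {p : Fin n × Fin n // p.1 ≠ p.2}

/-- `Sym(n)` acts on the ordered pairs of distinct elements. -/
instance opairsAction (n : ℕ) : MulAction (Equiv.Perm (Fin n)) (OPairs n) where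
  smul σ p := ⟨(σ p.1.1, σ p.1.2), fun h => p.2 (σ.injective h)⟩
  one_smul p := rfl
  mul_smul σ τ p := rfl

/-- Every element of `G` is an automorphism of `Γ`. -/
def PreservesAdj {V : Type*} (Γ : SimpleGraph V) (G : Subgroup (Equiv.Perm V)) : Prop :=
  ∀ g ∈ G, ∀ u v : V, Γ.Adj u v ↔ Γ.Adj (g u) (g v)

/-- The pointwise stabiliser in `G` of the ball of radius `i` around `x`. -/
def ballStab {V : Type*} (Γ : SimpleGraph V) (G : Subgroup (Equiv.Perm V)) (x : V) (i : ℕ) :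
    Subgroup G :=
  ⨅ (v : V) (_ : Γ.dist x v ≤ i), MulAction.stabilizer G v

/-- `(Γ, G)` is a locally `L` pair, for `L` the permutation group induced by `Sym(n)` on
ordered pairs of distinct elements of `{1,…,n}`. -/
def IsLocallyOPairs (n : ℕ) {V : Type*} (Γ : SimpleGraph V) (G : Subgroup (Equiv.Perm V)) :
    Prop :=
  PreservesAdj Γ G ∧ MulAction.IsPretransitive G V ∧
  ∀ x : V, ∃ (e : Γ.neighborSet x ≃ OPairs n)
      (φ : MulAction.stabilizer G x →* Equiv.Perm (Fin n)),
    Function.Surjective φ ∧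
    ∀ (g : MulAction.stabilizer G x) (v : Γ.neighborSet x),
      ((e.symm (φ g • e v) : Γ.neighborSet x) : V) = g • (v : V)

open Subgroup

section generic
variable {𝒢 : Type*} [Group 𝒢]

/-- conjugate subgroup -/
def cj (g : 𝒢) (H : Subgroup 𝒢) : Subgroup 𝒢 := H.map (MulAut.conj g).toMonoidHom

lemma mem_cj {g a : 𝒢} {H : Subgroup 𝒢} : a ∈ cj g H ↔ g⁻¹ * a * g ∈ H := by
  unfold cj
  rw [Subgroup.mem_map]
  constructor
  · rintro ⟨b, hb, rfl⟩
    simpa [mul_assoc] using hb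
  · intro h
    exact ⟨_, h, by simp [mul_assoc]⟩

lemma conj_mem_cj {g a : 𝒢} {H : Subgroup 𝒢} (h : a ∈ H) : g * a * g⁻¹ ∈ cj g H := by
  rw [mem_cj]; simpa [mul_assoc] using h

lemma cj_mono {g : 𝒢} {H K : Subgroup 𝒢} (h : H ≤ K) : cj g H ≤ cj g K := by
  intro a; rw [mem_cj, mem_cj]; exact fun x => h x

lemma cj_mul (g h : 𝒢) (H : Subgroup 𝒢) : cj g (cj h H) = cj (g * h) H := by
  ext a; simp [mem_cj, mul_assoc]

lemma cj_one (H : Subgroup 𝒢) : cj 1 H = H := by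
  ext a; simp [mem_cj]

lemma cj_inf (g : 𝒢) (H K : Subgroup 𝒢) : cj g (H ⊓ K) = cj g H ⊓ cj g K := by
  ext a; simp [mem_cj, Subgroup.mem_inf]

lemma cj_bot (g : 𝒢) : cj g (⊥ : Subgroup 𝒢) = ⊥ := by
  unfold cj; simp

lemma cj_inv_cj (g : 𝒢) (H : Subgroup 𝒢) : cj g⁻¹ (cj g H) = H := by
  rw [cj_mul]; simp [cj_one]

lemma cj_cj_inv (g : 𝒢) (H : Subgroup 𝒢) : cj g (cj g⁻¹ H) = H := by
  rw [cj_mul]; simp [cj_one]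

lemma cj_le_iff (g : 𝒢) (H K : Subgroup 𝒢) : cj g H ≤ K ↔ H ≤ cj g⁻¹ K := by
  constructor
  · intro h; have := cj_mono (g := g⁻¹) h; rwa [cj_inv_cj] at this
  · intro h; have := cj_mono (g := g) h; rwa [cj_cj_inv] at this

lemma cj_inj {g : 𝒢} {H K : Subgroup 𝒢} (h : cj g H = cj g K) : H = K := by
  have := congrArg (cj g⁻¹) h; rwa [cj_inv_cj, cj_inv_cj] at this

lemma card_cj (g : 𝒢) (H : Subgroup 𝒢) : Nat.card (cj g H) = Nat.card H :=
  (Nat.card_congr (H.equivMapOfInjective _ (MulAut.conj g).injective).toEquiv).symm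

lemma mem_nz {g : 𝒢} {H : Subgroup 𝒢} : g ∈ normalizer (H : Set 𝒢) ↔ cj g H = H :=
  mem_normalizer_iff_map_conj_eq

lemma le_nz {K H : Subgroup 𝒢} :
    K ≤ normalizer (H : Set 𝒢) ↔ ∀ k ∈ K, ∀ h ∈ H, k * h * k⁻¹ ∈ H := le_normalizer_iff

lemma nz_cj {K H : Subgroup 𝒢} (g : 𝒢) (h : K ≤ normalizer (H : Set 𝒢)) :
    cj g K ≤ normalizer (cj g H : Set 𝒢) := by
  rw [le_nz] at h ⊢
  intro k hk a ha
  rw [mem_cj] at *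
  have := h _ hk _ ha
  simpa [mul_assoc] using this

lemma nz_inf {K H L : Subgroup 𝒢} (h : K ≤ normalizer (H : Set 𝒢))
    (h' : K ≤ normalizer (L : Set 𝒢)) : K ≤ normalizer ((H ⊓ L : Subgroup 𝒢) : Set 𝒢) := by
  rw [le_nz] at h h' ⊢
  exact fun k hk a ha => ⟨h k hk a ha.1, h' k hk a ha.2⟩

/-- functor attached to a relation -/
def FQ (Q : Subgroup 𝒢 → Subgroup 𝒢 → Prop) (H : Subgroup 𝒢) : Subgroup 𝒢 := sSup {A | Q A H}

/-- conjugation invariance -/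
def CInv (Q : Subgroup 𝒢 → Subgroup 𝒢 → Prop) : Prop := ∀ A H g, Q A H → Q (cj g A) (cj g H)

lemma FQ_cj_le {Q : Subgroup 𝒢 → Subgroup 𝒢 → Prop} (hQ : CInv Q) (g : 𝒢) (H : Subgroup 𝒢) :
    cj g (FQ Q H) ≤ FQ Q (cj g H) := by
  rw [cj_le_iff]
  refine sSup_le fun A hA => ?_
  rw [← cj_le_iff]
  exact le_sSup (hQ _ _ _ hA)

lemma FQ_cj {Q : Subgroup 𝒢 → Subgroup 𝒢 → Prop} (hQ : CInv Q) (g : 𝒢) (H : Subgroup 𝒢) :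
    cj g (FQ Q H) = FQ Q (cj g H) := by
  refine le_antisymm (FQ_cj_le hQ g H) ?_
  have := FQ_cj_le hQ g⁻¹ (cj g H)
  rwa [cj_inv_cj, cj_le_iff, inv_inv] at this

lemma FQ_nz {Q : Subgroup 𝒢 → Subgroup 𝒢 → Prop} (hQ : CInv Q) (H : Subgroup 𝒢) :
    normalizer (H : Set 𝒢) ≤ normalizer (FQ Q H : Set 𝒢) := by
  intro g hg
  rw [mem_nz] at *
  rw [FQ_cj hQ, hg]

/-! O_p -/

/-- relation defining `O_p` -/
def OpQ (p : ℕ) (A H : Subgroup 𝒢) : Prop :=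
  A ≤ H ∧ H ≤ normalizer (A : Set 𝒢) ∧ IsPGroup p A

lemma isPGroup_cj {p : ℕ} {A : Subgroup 𝒢} (g : 𝒢) (h : IsPGroup p A) : IsPGroup p (cj g A) :=
  h.map _

lemma OpQ_cinv (p : ℕ) : CInv (𝒢 := 𝒢) (OpQ p) := fun _ _ g h =>
  ⟨cj_mono h.1, nz_cj g h.2.1, isPGroup_cj g h.2.2⟩

/-- `O_p` -/
def Op (p : ℕ) (H : Subgroup 𝒢) : Subgroup 𝒢 := FQ (OpQ p) H

lemma nz_sup {K H L : Subgroup 𝒢} (h : K ≤ normalizer (H : Set 𝒢))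
    (h' : K ≤ normalizer (L : Set 𝒢)) : K ≤ normalizer ((H ⊔ L : Subgroup 𝒢) : Set 𝒢) := by
  intro k hk
  have h1 := mem_nz.1 (h hk)
  have h2 := mem_nz.1 (h' hk)
  rw [mem_nz]
  unfold cj at *
  rw [Subgroup.map_sup, h1, h2]

lemma Op_spec [Finite 𝒢] (p : ℕ) (H : Subgroup 𝒢) : OpQ p (Op p H) H := by
  have hfin : {A : Subgroup 𝒢 | OpQ p A H}.Finite := Set.toFinite _
  have hne : {A : Subgroup 𝒢 | OpQ p A H}.Nonempty :=
    ⟨⊥, bot_le, by rw [le_nz]; simp, IsPGroup.of_bot⟩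
  obtain ⟨M, hM⟩ := hfin.exists_maximal hne
  have : Op p H = M := by
    refine le_antisymm (sSup_le fun A hA => ?_) (le_sSup hM.1)
    have h1 : OpQ p (M ⊔ A) H :=
      ⟨sup_le hM.1.1 hA.1, nz_sup hM.1.2.1 hA.2.1,
        IsPGroup.to_sup_of_normal_right' hM.1.2.2 hA.2.2 (hM.1.1.trans hA.2.1)⟩
    exact le_sup_right.trans (hM.2 h1 le_sup_left)
  rw [this]; exact hM.1

lemma le_Op {p : ℕ} {A H : Subgroup 𝒢} (h1 : A ≤ H) (h2 : H ≤ normalizer (A : Set 𝒢))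
    (h3 : IsPGroup p A) : A ≤ Op p H := le_sSup ⟨h1, h2, h3⟩

lemma Op_nz (p : ℕ) (H : Subgroup 𝒢) :
    normalizer (H : Set 𝒢) ≤ normalizer (Op p H : Set 𝒢) := FQ_nz (OpQ_cinv p) H

lemma Op_cj (p : ℕ) (g : 𝒢) (H : Subgroup 𝒢) : cj g (Op p H) = Op p (cj g H) :=
  FQ_cj (OpQ_cinv p) g H

/-! subnormality -/

/-- subnormal subgroups -/
inductive Subn (A : Subgroup 𝒢) : Subgroup 𝒢 → Prop
  | refl : Subn A A
  | step (B C : Subgroup 𝒢) : Subn A B → B ≤ C → C ≤ normalizer (B : Set 𝒢) → Subn A C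

lemma Subn.le {A C : Subgroup 𝒢} (h : Subn A C) : A ≤ C := by
  induction h with
  | refl => exact le_rfl
  | step B C _ h2 _ ih => exact ih.trans h2

lemma Subn.trans {A B C : Subgroup 𝒢} (h : Subn A B) (h' : Subn B C) : Subn A C := by
  induction h' with
  | refl => exact h
  | step B C _ h2 h3 ih => exact .step _ _ ih h2 h3

lemma Subn.of_normal {A C : Subgroup 𝒢} (h : A ≤ C) (h' : C ≤ normalizer (A : Set 𝒢)) : Subn A C :=
  .step _ _ .refl h h'

lemma Subn.inf {A C : Subgroup 𝒢} (h : Subn A C) (R : Subgroup 𝒢) : Subn (A ⊓ R) (C ⊓ R) := by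
  induction h with
  | refl => exact .refl
  | step B C _ h2 h3 ih =>
    refine .step _ _ ih (inf_le_inf_right _ h2) ?_
    exact nz_inf (inf_le_left.trans h3) (inf_le_right.trans le_normalizer)

lemma Subn.cj {A C : Subgroup 𝒢} (h : Subn A C) (g : 𝒢) : Subn (cj g A) (cj g C) := by
  induction h with
  | refl => exact .refl
  | step B C _ h2 h3 ih => exact .step _ _ ih (cj_mono h2) (nz_cj g h3)

lemma Subn.le_Op [Finite 𝒢] {p : ℕ} {A C : Subgroup 𝒢} (h : Subn A C) (hp : IsPGroup p A) :
    A ≤ Op p C := by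
  induction h with
  | refl => exact _root_.le_Op le_rfl le_normalizer hp
  | step B C _ h2 h3 ih =>
    refine ih.trans ?_
    exact _root_.le_Op ((Op_spec p B).1.trans h2) (h3.trans (Op_nz p B)) (Op_spec p B).2.2

/-- nonabelian simple -/
def NAS (A : Subgroup 𝒢) : Prop :=
  A ≠ ⊥ ∧ ⁅A, A⁆ = A ∧ ∀ N ≤ A, A ≤ normalizer (N : Set 𝒢) → N = ⊥ ∨ N = A

lemma NAS.cj {A : Subgroup 𝒢} (h : NAS A) (g : 𝒢) : NAS (cj g A) := by
  refine ⟨fun h' => h.1 ?_, ?_, fun N hN hAN => ?_⟩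
  · rw [← cj_bot g] at h'; exact cj_inj h'
  · have := h.2.1
    unfold _root_.cj
    rw [← Subgroup.map_commutator, this]
  · have h1 : _root_.cj g⁻¹ N ≤ A := by rwa [cj_le_iff, inv_inv]
    have h2 := nz_cj g⁻¹ hAN
    rw [cj_inv_cj] at h2
    rcases h.2.2 _ h1 h2 with h3 | h3
    · left; rw [← cj_cj_inv g N, h3, cj_bot]
    · right; rw [← h3, cj_cj_inv]

lemma comm_le_right {K N : Subgroup 𝒢} (h : K ≤ normalizer (N : Set 𝒢)) : ⁅K, N⁆ ≤ N := by
  rw [commutator_le]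
  intro a ha b hb
  rw [commutatorElement_def]
  exact N.mul_mem (le_nz.1 h a ha b hb) (N.inv_mem hb)

lemma comm_le_left {K N : Subgroup 𝒢} (h : N ≤ normalizer (K : Set 𝒢)) : ⁅K, N⁆ ≤ K := by
  rw [commutator_comm]; exact comm_le_right h

lemma zipper {K C : Subgroup 𝒢} (h : Subn K C) (hK : ⁅K, K⁆ = K) :
    ∀ N ≤ C, C ≤ normalizer (N : Set 𝒢) → K ⊓ N = ⊥ → ⁅K, N⁆ = ⊥ := by
  induction h with
  | refl =>
    intro N hN hCN hinf
    rw [eq_bot_iff, ← hinf]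
    exact le_inf (comm_le_left (hN.trans le_normalizer)) (comm_le_right hCN)
  | step B C hs h2 h3 ih =>
    intro N hN hCN hinf
    have h4 : ⁅K, N ⊓ B⁆ = ⊥ := by
      refine ih _ inf_le_right (nz_inf (h2.trans hCN) le_normalizer) ?_
      rw [eq_bot_iff, ← hinf]
      exact inf_le_inf_left _ inf_le_left
    have h5 : ⁅K, N⁆ ≤ N ⊓ B :=
      le_inf (comm_le_right ((hs.le.trans h2).trans hCN))
        ((commutator_mono hs.le le_rfl).trans (comm_le_left (hN.trans h3)))
    have h6 : ⁅⁅K, N⁆, K⁆ = ⊥ := by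
      rw [commutator_comm, eq_bot_iff, ← h4]
      exact commutator_mono le_rfl h5
    have h7 : ⁅⁅N, K⁆, K⁆ = ⊥ := by rw [commutator_comm N K]; exact h6
    have := commutator_commutator_eq_bot_of_rotate (H₁ := K) (H₂ := K) (H₃ := N) h6 h7
    rwa [hK] at this

/-- If a nontrivial finite group has trivial `O_p` for all `p` then it has a non-abelian simple
subnormal subgroup. -/
lemma exists_NAS [Finite 𝒢] {C : Subgroup 𝒢} (hC : C ≠ ⊥)
    (hO : ∀ p : ℕ, p.Prime → Op p C = ⊥) : ∃ A, Subn A C ∧ NAS A := by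
  have hfin : {A : Subgroup 𝒢 | Subn A C ∧ A ≠ ⊥}.Finite := Set.toFinite _
  obtain ⟨A, hA⟩ := hfin.exists_minimal ⟨C, .refl, hC⟩
  have hsimp : ∀ N ≤ A, A ≤ normalizer (N : Set 𝒢) → N = ⊥ ∨ N = A := by
    intro N hN hAN
    by_cases h : N = ⊥
    · exact .inl h
    · exact .inr (le_antisymm hN (hA.2 ⟨(Subn.of_normal hN hAN).trans hA.1.1, h⟩ hN))
  refine ⟨A, hA.1.1, hA.1.2, ?_, hsimp⟩
  have hcA : ⁅A, A⁆ ≤ A := comm_le_left le_normalizer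
  have hcN : A ≤ normalizer ((⁅A, A⁆ : Subgroup 𝒢) : Set 𝒢) := by
    intro u hu
    have h1 : cj u A = A := mem_nz.1 (le_normalizer hu)
    rw [mem_nz]
    unfold cj at *
    rw [Subgroup.map_commutator, h1]
  rcases hsimp ⁅A, A⁆ hcA hcN with h | h
  · exfalso
    obtain ⟨a, haA, ha⟩ := (Subgroup.ne_bot_iff_exists_ne_one).1 hA.1.2 |> fun ⟨a, h⟩ =>
      (⟨a.1, a.2, fun h' => h (Subtype.ext h')⟩ : ∃ a : 𝒢, a ∈ A ∧ a ≠ 1)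
    have hcomm : ∀ u ∈ A, ∀ v ∈ A, u * v = v * u := by
      intro u hu v hv
      have := commutator_mem_commutator hu hv
      rw [h, Subgroup.mem_bot, commutatorElement_eq_one_iff_mul_comm] at this
      exact this
    have ho : orderOf a ≠ 1 := by rwa [Ne, orderOf_eq_one_iff]
    obtain ⟨p, hp, k, hk⟩ := Nat.exists_prime_and_dvd ho
    set b := a ^ k with hb
    have hbo : b ^ p = 1 := by rw [hb, ← pow_mul, mul_comm, ← hk, pow_orderOf_eq_one]
    have hb1 : b ≠ 1 := by
      intro h1
      have h2 := orderOf_dvd_of_pow_eq_one h1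
      have hpos : 0 < orderOf a := orderOf_pos a
      have hk0 : 0 < k := by
        rcases Nat.eq_zero_or_pos k with h | h
        · rw [h, mul_zero] at hk; omega
        · exact h
      have h3 := Nat.le_of_dvd hk0 h2
      have := hp.two_le
      nlinarith
    have hbA : b ∈ A := A.pow_mem haA k
    have hz : zpowers b ≤ A := by simpa using hbA
    have hzN : A ≤ normalizer ((zpowers b : Subgroup 𝒢) : Set 𝒢) := by
      rw [le_nz]
      intro u hu v hv
      have : u * v * u⁻¹ = v := by rw [hcomm u hu v (hz hv)]; simp
      rwa [this]
    rcases hsimp _ hz hzN with h1 | h1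
    · simp [hb1] at h1
    · have hpg : IsPGroup p A := by
        rw [← h1]
        apply IsPGroup.of_card_dvd_pow (n := 1)
        rw [Nat.card_zpowers, pow_one]
        exact orderOf_dvd_of_pow_eq_one hbo
      have := hA.1.1.le_Op hpg
      rw [hO p hp] at this
      exact hA.1.2 (le_bot_iff.1 this)
  · exact h

end generic

open Subgroup

section amalgam
variable {𝒢 : Type*} [Group 𝒢]

/-- The abstract amalgam data. -/
structure Amal (X T T0 : Subgroup 𝒢) (t : 𝒢) : Prop where
  TX : T ≤ X
  T0T : T0 ≤ T
  XN0 : X ≤ normalizer (T0 : Set 𝒢)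
  tT : cj t T = T
  tt : cj t (cj t T0) = T0
  faith : ∀ H ≤ T, X ≤ normalizer (H : Set 𝒢) → cj t H = H → H = ⊥
  qp : ∀ M ≤ X, X ≤ normalizer (M : Set 𝒢) → ¬ M ≤ T0 → ∀ H : Subgroup 𝒢,
    M ≤ normalizer (H : Set 𝒢) → T ≤ normalizer (H : Set 𝒢) → X ≤ normalizer (H : Set 𝒢)

/-- the edge kernel -/
def Rk (T0 : Subgroup 𝒢) (t : 𝒢) : Subgroup 𝒢 := T0 ⊓ cj t T0

variable {X T T0 : Subgroup 𝒢} {t : 𝒢}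

namespace Amal

lemma T1T (h : Amal X T T0 t) : cj t T0 ≤ T := by
  have := cj_mono (g := t) h.T0T; rwa [h.tT] at this

lemma TN0 (h : Amal X T T0 t) : T ≤ normalizer (T0 : Set 𝒢) := h.TX.trans h.XN0

lemma TN1 (h : Amal X T T0 t) : T ≤ normalizer (cj t T0 : Set 𝒢) := by
  have := nz_cj t h.TN0; rwa [h.tT] at this

lemma TNR (h : Amal X T T0 t) : T ≤ normalizer (Rk T0 t : Set 𝒢) := nz_inf h.TN0 h.TN1

lemma tR (h : Amal X T T0 t) : cj t (Rk T0 t) = Rk T0 t := by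
  unfold Rk; rw [cj_inf, h.tt, inf_comm]

lemma RT (h : Amal X T T0 t) : Rk T0 t ≤ T := inf_le_left.trans h.T0T

lemma R_bot (h : Amal X T T0 t) (hX : X ≤ normalizer (Rk T0 t : Set 𝒢)) : Rk T0 t = ⊥ :=
  h.faith _ h.RT hX h.tR

lemma key (h : Amal X T T0 t) {Q : Subgroup 𝒢 → Subgroup 𝒢 → Prop} (hQ : CInv Q)
    (hle : ∀ A H, Q A H → A ≤ H) (he : FQ Q T0 = FQ Q (Rk T0 t)) : FQ Q T0 = ⊥ := by
  refine h.faith _ (sSup_le fun A hA => (hle _ _ hA).trans h.T0T) (h.XN0.trans (FQ_nz hQ _)) ?_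
  rw [he, FQ_cj hQ, h.tR]

lemma cent_nz (X H : Subgroup 𝒢) (h : X ≤ normalizer (H : Set 𝒢)) :
    X ≤ normalizer ((X ⊓ centralizer (H : Set 𝒢) : Subgroup 𝒢) : Set 𝒢) := by
  refine nz_inf le_normalizer ?_
  rw [le_nz]
  intro g hg a ha
  rw [mem_centralizer_iff] at ha ⊢
  intro b hb
  have h1 : g⁻¹ * b * g ∈ H := by
    have := le_nz.1 h g⁻¹ (X.inv_mem hg) b hb; simpa using this
  have h2 := ha _ h1
  calc b * (g * a * g⁻¹) = g * ((g⁻¹ * b * g) * a) * g⁻¹ := by group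
    _ = g * (a * (g⁻¹ * b * g)) * g⁻¹ := by rw [h2]
    _ = g * a * g⁻¹ * b := by group

lemma cent_le_nz {H K : Subgroup 𝒢} (h : K ≤ H) :
    centralizer (H : Set 𝒢) ≤ normalizer (K : Set 𝒢) := by
  rw [le_nz]
  intro a ha b hb
  rw [← mem_centralizer_iff.1 ha b (h hb)]
  simpa using hb

lemma cent_R (h : Amal X T T0 t) (hM : ¬ X ⊓ centralizer (T0 : Set 𝒢) ≤ T0) : Rk T0 t = ⊥ :=
  h.R_bot (h.qp _ inf_le_left (cent_nz _ _ h.XN0) hM _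
    (inf_le_right.trans (cent_le_nz inf_le_left)) h.TNR)

/-- relation: nonabelian simple subnormal -/
def NQ (A H : Subgroup 𝒢) : Prop := Subn A H ∧ NAS A

lemma NQ_cinv : CInv (𝒢 := 𝒢) NQ := fun _ _ g h => ⟨h.1.cj g, h.2.cj g⟩

lemma R_le_T0_nz (h : Amal X T T0 t) : T0 ≤ normalizer (Rk T0 t : Set 𝒢) := h.T0T.trans h.TNR

lemma exists_p [Finite 𝒢] (h : Amal X T T0 t) (hR : Rk T0 t ≠ ⊥) :
    ∃ p : ℕ, p.Prime ∧ Op p T0 ≠ ⊥ := by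
  by_contra! hO
  apply hR
  have hT0 : T0 ≠ ⊥ := by
    intro h0; apply hR; rw [eq_bot_iff, ← h0]; exact inf_le_left
  have hex : ∃ A, NQ A T0 ∧ ¬ A ≤ cj t T0 := by
    by_contra! hall
    have he : FQ NQ T0 = FQ NQ (Rk T0 t) := by
      suffices hs : {A | NQ A T0} = {A | NQ A (Rk T0 t)} by unfold FQ; rw [hs]
      ext A
      simp only [Set.mem_ofPred_eq]
      constructor
      · rintro ⟨h1, h2⟩
        refine ⟨?_, h2⟩
        have h3 : A ≤ Rk T0 t := le_inf h1.le (hall A ⟨h1, h2⟩)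
        have := h1.inf (Rk T0 t)
        have h4 : T0 ⊓ Rk T0 t = Rk T0 t := inf_eq_right.2 inf_le_left
        rwa [inf_eq_left.2 h3, h4] at this
      · rintro ⟨h1, h2⟩
        exact ⟨.step _ _ h1 inf_le_left h.R_le_T0_nz, h2⟩
    have h0 := h.key NQ_cinv (fun A H hA => hA.1.le) he
    obtain ⟨A, hA1, hA2⟩ := exists_NAS hT0 hO
    have : A ≤ FQ NQ T0 := le_sSup ⟨hA1, hA2⟩
    rw [h0, le_bot_iff] at this
    exact hA2.1 this
  obtain ⟨A, ⟨hA1, hA2⟩, hA3⟩ := hex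
  have hB1 : Subn (cj t A) T := .step _ _ (hA1.cj t) h.T1T h.TN1
  have hB2 : NAS (cj t A) := hA2.cj t
  have hB3 : ¬ cj t A ≤ T0 := by
    intro h'; rw [← h.tt, cj_le_iff, cj_inv_cj] at h'; exact hA3 h'
  have hinf : cj t A ⊓ T0 = ⊥ := by
    rcases hB2.2.2 (cj t A ⊓ T0) inf_le_left
      (nz_inf le_normalizer (hB1.le.trans h.TN0)) with h1 | h1
    · exact h1
    · exact absurd (inf_eq_left.1 h1) hB3
  have hc := zipper hB1 hB2.2.1 T0 h.T0T h.TN0 hinf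
  rw [commutator_eq_bot_iff_le_centralizer] at hc
  apply h.cent_R
  intro h'
  exact hB3 ((le_inf (hB1.le.trans h.TX) hc).trans h')

lemma Op_not_le [Finite 𝒢] (h : Amal X T T0 t) {p : ℕ} (hp : Op p T0 ≠ ⊥) :
    ¬ Op p T0 ≤ cj t T0 := by
  intro hle
  apply hp
  have s0 := Op_spec p T0
  have sR := Op_spec p (Rk T0 t)
  refine h.key (OpQ_cinv p) (fun A H hA => hA.1) (le_antisymm ?_ ?_)
  · exact le_Op (le_inf s0.1 hle) (inf_le_left.trans s0.2.1) s0.2.2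
  · exact le_Op (sR.1.trans inf_le_left) (h.R_le_T0_nz.trans (Op_nz p _)) sR.2.2

lemma Op1_not_le [Finite 𝒢] (h : Amal X T T0 t) {p : ℕ} (hp : Op p T0 ≠ ⊥) :
    ¬ cj t (Op p T0) ≤ T0 := by
  intro h'
  have h2 : cj t (Op p T0) ≤ cj t (cj t T0) := by rw [h.tt]; exact h'
  rw [cj_le_iff, cj_inv_cj] at h2
  exact h.Op_not_le hp h2

lemma Op1_TN [Finite 𝒢] (h : Amal X T T0 t) (p : ℕ) :
    T ≤ normalizer (cj t (Op p T0) : Set 𝒢) := by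
  rw [Op_cj]; exact h.TN1.trans (Op_nz p _)

/-- Elements of order prime to p of `Z` lie in `N` if `z ^ p ^ k ∈ N`. -/
lemma pprime_mem {p : ℕ} {N : Subgroup 𝒢} {z : 𝒢} (hz : (orderOf z).Coprime p) {k : ℕ}
    (hk : z ^ p ^ k ∈ N) : z ∈ N := by
  obtain ⟨m, hm⟩ := exists_pow_eq_self_of_coprime (n := p ^ k) (x := z)
    ((hz.pow_right k).symm)
  rw [← hm]; exact N.pow_mem hk m

/-- If `P` is a `p`-group, `N` normalised by `P`, then for `z = n u`, `z^(p^k) ∈ N` some `k`. -/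
lemma pow_mem_of_pgroup {p : ℕ} {P N : Subgroup 𝒢} (hP : IsPGroup p P)
    (hN : P ≤ normalizer (N : Set 𝒢)) {n u : 𝒢} (hn : n ∈ N) (hu : u ∈ P) :
    ∃ k, (n * u) ^ p ^ k ∈ N := by
  obtain ⟨k, hk⟩ := hP ⟨u, hu⟩
  have hk' : u ^ p ^ k = 1 := by simpa using congrArg Subtype.val hk
  refine ⟨k, ?_⟩
  have : ∀ j : ℕ, ∃ m ∈ N, (n * u) ^ j = m * u ^ j := by
    intro j
    induction j with
    | zero => exact ⟨1, N.one_mem, by simp⟩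
    | succ j ih =>
      obtain ⟨m, hm, he⟩ := ih
      refine ⟨m * (u ^ j * n * (u ^ j)⁻¹),
        N.mul_mem hm (le_nz.1 hN _ (P.pow_mem hu j) _ hn), ?_⟩
      rw [pow_succ, he, pow_succ]; group
  obtain ⟨m, hm, he⟩ := this (p ^ k)
  rw [he, hk', mul_one]; exact hm

/-- Wielandt. -/
lemma wielandt {p : ℕ} {P T1 Q T : Subgroup 𝒢} (hP : IsPGroup p P) (hPT : P ≤ T)
    (hTP : T ≤ normalizer (P : Set 𝒢))
    (hT1T : T1 ≤ T) (hTT1 : T ≤ normalizer (T1 : Set 𝒢)) (hQ : Q ≤ T1)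
    (hTQ : T1 ≤ normalizer (Q : Set 𝒢)) {z u : 𝒢} (hz : z ∈ Q) (hzo : (orderOf z).Coprime p)
    (hu : u ∈ P) : u * z * u⁻¹ ∈ Q := by
  have ho : (orderOf (u * z * u⁻¹)).Coprime p := by
    have : orderOf (u * z * u⁻¹) = orderOf z := by
      have := orderOf_injective (MulAut.conj u).toMonoidHom (MulAut.conj u).injective z
      simpa using this
    rwa [this]
  have hzT1 : z ∈ T1 := hQ hz
  have h1 : u * z * u⁻¹ ∈ T1 := le_nz.1 hTT1 u (hPT hu) z hzT1
  have hv : z⁻¹ * u * z * u⁻¹ ∈ P := by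
    refine P.mul_mem ?_ (P.inv_mem hu)
    have := le_nz.1 hTP z⁻¹ (T.inv_mem (hT1T hzT1)) u hu
    simpa using this
  have hv1 : z⁻¹ * u * z * u⁻¹ ∈ T1 := by
    have := T1.mul_mem (T1.inv_mem hzT1) h1
    simpa [mul_assoc] using this
  obtain ⟨k, hk⟩ := pow_mem_of_pgroup (P := P ⊓ T1) (N := Q) hP.to_inf_left
    (inf_le_right.trans hTQ) hz ⟨hv, hv1⟩
  have he : z * (z⁻¹ * u * z * u⁻¹) = u * z * u⁻¹ := by group
  rw [he] at hk
  exact pprime_mem ho hk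

lemma R_pgroup [Finite 𝒢] (h : Amal X T T0 t) {p : ℕ} (hpp : p.Prime) (hp : Op p T0 ≠ ⊥) :
    IsPGroup p (Rk T0 t) := by
  set P := cj t (Op p T0) with hPdef
  have hPp : IsPGroup p P := isPGroup_cj t (Op_spec p T0).2.2
  have hPT : P ≤ T := (cj_mono (Op_spec p T0).1).trans h.T1T
  have hPN : T ≤ normalizer (P : Set 𝒢) := h.Op1_TN p
  set D : Set 𝒢 := {z | z ∈ Rk T0 t ∧ (orderOf z).Coprime p} with hD
  set H := Subgroup.closure D with hH
  have hconjo : ∀ (u z : 𝒢), orderOf (u * z * u⁻¹) = orderOf z := by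
    intro u z
    have := orderOf_injective (MulAut.conj u).toMonoidHom (MulAut.conj u).injective z
    simpa using this
  have hstab : ∀ u : 𝒢, cj u (Rk T0 t) = Rk T0 t → ∀ z ∈ D, u * z * u⁻¹ ∈ D := by
    intro u hu z hz
    refine ⟨?_, by rw [hconjo]; exact hz.2⟩
    rw [← hu]; exact conj_mem_cj hz.1
  have hclos : ∀ u : 𝒢, (∀ z ∈ D, u * z * u⁻¹ ∈ D) → cj u H ≤ H := by
    intro u hu
    rw [cj_le_iff, hH, Subgroup.closure_le]
    intro z hz
    have := Subgroup.subset_closure (hu z hz)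
    simp only [SetLike.mem_coe, mem_cj, inv_inv]
    exact this
  have hnz : ∀ K : Subgroup 𝒢, (∀ u ∈ K, ∀ z ∈ D, u * z * u⁻¹ ∈ D) →
      K ≤ normalizer (H : Set 𝒢) := by
    intro K hK
    rw [le_nz]
    intro u hu a ha
    exact hclos u (hK u hu) (conj_mem_cj ha)
  have hTH : T ≤ normalizer (H : Set 𝒢) :=
    hnz T fun u hu => hstab u (mem_nz.1 (h.TNR hu))
  have hHR : H ≤ Rk T0 t := by rw [hH, Subgroup.closure_le]; exact fun z hz => hz.1
  have htH : cj t H = H := by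
    apply le_antisymm (hclos t (hstab t h.tR))
    have : cj t⁻¹ H ≤ H := by
      apply hclos; apply hstab
      conv_lhs => rw [← h.tR]
      rw [cj_inv_cj]
    rw [cj_le_iff, inv_inv] at this; exact this
  -- the normal closure
  set M : Subgroup 𝒢 := ⨆ g ∈ X, cj g P with hM
  have hMX : M ≤ X := by
    refine iSup₂_le fun g hg => ?_
    have h1 := cj_mono (g := g) (hPT.trans h.TX)
    rwa [mem_nz.1 (le_normalizer hg)] at h1
  have hXM : X ≤ normalizer (M : Set 𝒢) := by
    have hle : ∀ g ∈ X, cj g M ≤ M := by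
      intro g hg
      rw [cj_le_iff]
      refine iSup₂_le fun g' hg' => ?_
      rw [← cj_le_iff, cj_mul]
      exact le_iSup₂_of_le (g * g') (X.mul_mem hg hg') le_rfl
    rw [le_nz]
    intro g hg a ha
    exact hle g hg (conj_mem_cj ha)
  have hMT0 : ¬ M ≤ T0 := by
    intro h'
    apply h.Op1_not_le hp
    refine le_trans ?_ h'
    refine le_iSup₂_of_le 1 X.one_mem ?_
    rw [cj_one]
  have hMH : M ≤ normalizer (H : Set 𝒢) := by
    refine iSup₂_le fun g hg => ?_
    apply hnz
    intro u hu z hz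
    refine ⟨?_, by rw [hconjo]; exact hz.2⟩
    have hT0g : cj g T0 = T0 := mem_nz.1 (h.XN0 hg)
    refine wielandt (p := p) (P := cj g P) (T1 := T0) (T := cj g T) (Q := Rk T0 t)
      (isPGroup_cj g hPp) (cj_mono hPT) (nz_cj g hPN) ?_ ?_ inf_le_left h.R_le_T0_nz hz.1 hz.2 hu
    · rw [← hT0g]; exact cj_mono h.T0T
    · have := nz_cj g h.TN0; rwa [hT0g] at this
  have hXH := h.qp M hMX hXM hMT0 H hMH hTH
  have hbot := h.faith H (hHR.trans h.RT) hXH htH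
  -- conclude
  intro z
  have hzpos : 0 < orderOf z.1 := orderOf_pos _
  obtain ⟨k, m, hm, hkm⟩ := Nat.exists_eq_pow_mul_and_not_dvd hzpos.ne' p hpp.ne_one
  refine ⟨k, ?_⟩
  have hzD : z.1 ^ p ^ k ∈ D := by
    refine ⟨(Rk T0 t).pow_mem z.2 _, ?_⟩
    rw [orderOf_pow, hkm, Nat.gcd_eq_right (Dvd.intro _ rfl),
      Nat.mul_div_cancel_left _ (pow_pos hpp.pos k)]
    exact ((hpp.coprime_iff_not_dvd).2 hm).symm
  have : z.1 ^ p ^ k ∈ H := Subgroup.subset_closure hzD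
  rw [hbot, Subgroup.mem_bot] at this
  exact Subtype.ext (by simpa using this)

end Amal
end amalgam

open Subgroup

section five
variable {𝒢 : Type*} [Group 𝒢]

/-- abelian subgroups of maximal order -/
def JQ (A H : Subgroup 𝒢) : Prop :=
  A ≤ H ∧ (∀ a ∈ A, ∀ b ∈ A, a * b = b * a) ∧
    ∀ B ≤ H, (∀ a ∈ B, ∀ b ∈ B, a * b = b * a) → Nat.card B ≤ Nat.card A

lemma comm_cj {A : Subgroup 𝒢} (g : 𝒢) (h : ∀ a ∈ A, ∀ b ∈ A, a * b = b * a) :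
    ∀ a ∈ cj g A, ∀ b ∈ cj g A, a * b = b * a := by
  intro a ha b hb
  rw [mem_cj] at ha hb
  have := h _ ha _ hb
  have h2 : g * (g⁻¹ * a * g * (g⁻¹ * b * g)) * g⁻¹ = g * (g⁻¹ * b * g * (g⁻¹ * a * g)) * g⁻¹ := by
    rw [this]
  simpa [mul_assoc] using h2

lemma JQ_cinv : CInv (𝒢 := 𝒢) JQ := by
  rintro A H g ⟨h1, h2, h3⟩
  refine ⟨cj_mono h1, comm_cj g h2, fun B hB hc => ?_⟩
  have := h3 (cj g⁻¹ B) (by rw [cj_le_iff, inv_inv]; exact hB) (comm_cj _ hc)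
  rwa [card_cj, ← card_cj g A] at this

lemma exists_JQ [Finite 𝒢] (H : Subgroup 𝒢) : ∃ A, JQ A H := by
  have hfin : {A : Subgroup 𝒢 | A ≤ H ∧ ∀ a ∈ A, ∀ b ∈ A, a * b = b * a}.Finite := Set.toFinite _
  obtain ⟨A, hA, hmax⟩ := Set.exists_max_image _ (fun A : Subgroup 𝒢 => Nat.card A) hfin
    ⟨⊥, bot_le, by simp⟩
  exact ⟨A, hA.1, hA.2, fun B hB hc => hmax B ⟨hB, hc⟩⟩

lemma JQ_ne_bot [Finite 𝒢] {A H : Subgroup 𝒢} (h : JQ A H) (hH : H ≠ ⊥) : A ≠ ⊥ := by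
  intro h0
  obtain ⟨a, ha⟩ := (Subgroup.ne_bot_iff_exists_ne_one).1 hH
  have h1 := h.2.2 (zpowers a.1) (by simp) (by
    rintro _ ⟨i, rfl⟩ _ ⟨j, rfl⟩
    simp only [← zpow_add, add_comm])
  rw [h0, Subgroup.card_bot, Nat.card_zpowers] at h1
  have h2 : orderOf a.1 = 1 := le_antisymm h1 (orderOf_pos _)
  rw [orderOf_eq_one_iff] at h2
  exact ha (Subtype.ext h2)

lemma relIndex_mul_card_aux (H K : Subgroup 𝒢) (h : H ≤ K) :
    H.relIndex K * Nat.card H = Nat.card K := by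
  have := Subgroup.relIndex_mul_relIndex ⊥ H K bot_le h
  rw [Subgroup.relIndex_bot_left, Subgroup.relIndex_bot_left] at this
  rw [mul_comm]; exact this

lemma three_elt (a : Equiv.Perm (Fin 5)) (ha : a ≠ 1) (h3 : ∃ k, a ^ 3 ^ k = 1) :
    ∃ s : Equiv.Perm (Fin 5), (a * (s * a * s⁻¹)) ^ 5 = 1 ∧ a * (s * a * s⁻¹) ≠ 1 := by
  obtain ⟨k, hk⟩ := h3
  have h1 : orderOf a ∣ 3 ^ k := orderOf_dvd_of_pow_eq_one hk
  obtain ⟨j, -, hj⟩ := (Nat.dvd_prime_pow Nat.prime_three).1 h1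
  have hcard : orderOf a ∣ 120 := by
    have := orderOf_dvd_natCard a
    rwa [Nat.card_perm, Nat.card_fin] at this
  have hj1 : orderOf a = 3 := by
    rw [hj] at hcard ⊢
    rcases j with _ | _ | j
    · rw [pow_zero, orderOf_eq_one_iff] at hj; exact absurd hj ha
    · rfl
    · exfalso
      have : 9 ∣ 120 := dvd_trans ⟨3 ^ j, by ring⟩ hcard
      omega
  have hct : a.cycleType = {3} := by
    obtain ⟨n, hn⟩ := Equiv.Perm.cycleType_prime_order (σ := a) (by rw [hj1]; exact Nat.prime_three)
    have hs := a.sum_cycleType_le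
    rw [hn, hj1] at hs
    simp at hs
    have : n = 0 := by omega
    rw [hn, hj1, this]; rfl
  set c : Equiv.Perm (Fin 5) := Equiv.swap 0 1 * Equiv.swap 1 2 with hc
  have hc3 : c.cycleType = {3} := by decide +revert
  obtain ⟨g, hg⟩ := isConj_iff.1 (Equiv.Perm.isConj_iff_cycleType_eq.2 (hc3.trans hct.symm))
  set s : Equiv.Perm (Fin 5) := Equiv.swap 0 3 * Equiv.swap 1 4 with hs
  have e : a * ((g * s * g⁻¹) * a * (g * s * g⁻¹)⁻¹) = g * (c * (s * c * s⁻¹)) * g⁻¹ := by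
    rw [← hg]; group
  refine ⟨g * s * g⁻¹, ?_, ?_⟩
  · rw [e, conj_pow]
    have : (c * (s * c * s⁻¹)) ^ 5 = 1 := by 
      rw [hc, hs, pow_succ, pow_succ, pow_succ, pow_two]
      set_option maxRecDepth 100000 in
      decide
    rw [this]; simp
  · rw [e]
    intro h'
    have : c * (s * c * s⁻¹) = 1 := by
      rw [mul_inv_eq_one] at h'; exact mul_eq_left.1 h'
    revert this
    rw [hc, hs]; decide

/-- coprime counting -/
lemma five_cent [Finite 𝒢] {V : Subgroup 𝒢} (hV : IsPGroup 3 V) {d : 𝒢}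
    (hd : d ∈ normalizer (V : Set 𝒢)) (hd5 : ∃ k, d ^ 5 ^ k = 1)
    (hidx : (centralizer {d}).relIndex V ≤ 9) : V ≤ centralizer {d} := by
  have := Fact.mk Nat.prime_five
  have := Fact.mk Nat.prime_three
  have hZ : zpowers d ≤ normalizer (V : Set 𝒢) := by simpa using hd
  let act : MulAction (zpowers d) V :=
    { smul := fun u v => ⟨u.1 * v.1 * u.1⁻¹, le_nz.1 hZ u.1 u.2 v.1 v.2⟩
      one_smul := fun v => Subtype.ext (show (1 : 𝒢) * v.1 * (1 : 𝒢)⁻¹ = v.1 by simp)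
      mul_smul := fun u w v => Subtype.ext
        (show (u.1 * w.1) * v.1 * (u.1 * w.1)⁻¹ = u.1 * (w.1 * v.1 * w.1⁻¹) * u.1⁻¹ by group) }
  have hP : IsPGroup 5 (zpowers d) := by
    obtain ⟨k, hk⟩ := hd5
    apply IsPGroup.of_card_dvd_pow (n := k)
    rw [Nat.card_zpowers]
    exact orderOf_dvd_of_pow_eq_one hk
  have hmod := hP.card_modEq_card_fixedPoints V
  have hfix : Nat.card (fixedPoints (zpowers d) V) =
      Nat.card ((centralizer {d}).subgroupOf V) := by
    apply Nat.card_congr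
    refine Equiv.subtypeEquivRight fun v => ?_
    constructor
    · intro hv
      rw [Subgroup.mem_subgroupOf, mem_centralizer_singleton_iff]
      have h1 := congrArg Subtype.val (hv ⟨d, mem_zpowers d⟩)
      have h2 : d * v.1 * d⁻¹ = v.1 := h1
      rw [mul_inv_eq_iff_eq_mul] at h2
      exact h2.symm
    · intro hv
      have hv' : v.1 ∈ centralizer {d} := hv
      rw [mem_centralizer_singleton_iff] at hv'
      rintro ⟨u, ⟨i, rfl⟩⟩
      apply Subtype.ext
      show d ^ i * v.1 * (d ^ i)⁻¹ = v.1
      have : Commute (d ^ i) v.1 := Commute.zpow_left hv'.symm i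
      rw [this.eq]; simp
  rw [hfix] at hmod
  obtain ⟨n, hn⟩ := hV.index ((centralizer {d}).subgroupOf V)
  have hmul := ((centralizer {d}).subgroupOf V).card_mul_index
  have hn9 : 3 ^ n ≤ 9 := by rw [← hn]; exact hidx
  obtain ⟨c, hc⟩ := IsPGroup.iff_card.1 (hV.to_subgroup ((centralizer {d}).subgroupOf V))
  rw [← hmul, hn] at hmod
  have hcop : Nat.Coprime 5 (Nat.card ((centralizer {d}).subgroupOf V)) := by
    rw [hc]; exact Nat.Coprime.pow_right c (by norm_num)
  have hmod2 : 3 ^ n ≡ 1 [MOD 5] := by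
    apply Nat.ModEq.cancel_left_of_coprime (c := Nat.card ((centralizer {d}).subgroupOf V)) hcop
    simpa using hmod
  have hn0 : n = 0 := by
    have hn2 : n ≤ 2 := by
      by_contra hlt
      have : 3 ^ 3 ≤ 3 ^ n := Nat.pow_le_pow_right (by norm_num) (by omega)
      omega
    interval_cases n
    · rfl
    · exact absurd hmod2 (by decide)
    · exact absurd hmod2 (by decide)
  rw [hn0, pow_zero, Subgroup.index_eq_one, Subgroup.subgroupOf_eq_top] at hn
  exact hn

lemma Amal.five [Finite 𝒢] {X T T0 : Subgroup 𝒢} {t : 𝒢} (h : Amal X T T0 t)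
    (φ : X →* Equiv.Perm (Fin 5)) (hφ : Function.Surjective φ)
    (hker : ∀ g : X, φ g = 1 ↔ g.1 ∈ T0) (hR : IsPGroup 3 (Rk T0 t)) : Rk T0 t = ⊥ := by
  by_contra hne
  have := Fact.mk Nat.prime_three
  set P0 := Op 3 T0 with hP0
  set S := Op 3 T with hS
  have s0 := Op_spec 3 T0
  have sT := Op_spec 3 T
  have hXP0 : X ≤ normalizer (P0 : Set 𝒢) := h.XN0.trans (Op_nz 3 T0)
  have hTS : T ≤ normalizer (S : Set 𝒢) := sT.2.1
  have htS : cj t S = S := by rw [hS, Op_cj, h.tT]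
  have hP0S : P0 ≤ S := le_Op (s0.1.trans h.T0T) (h.TX.trans hXP0) s0.2.2
  have hSP0 : S ⊓ T0 = P0 := by
    apply le_antisymm
    · exact le_Op inf_le_right (nz_inf (h.T0T.trans hTS) le_normalizer) sT.2.2.to_inf_left
    · exact le_inf hP0S s0.1
  have hRP0 : Rk T0 t ≤ P0 := le_Op inf_le_left h.R_le_T0_nz hR
  have hSne : S ≠ ⊥ := by
    intro h0; apply hne; rw [eq_bot_iff, ← h0]; exact hRP0.trans hP0S
  -- (a)
  have hcP0 : X ⊓ centralizer (P0 : Set 𝒢) ≤ T0 := by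
    by_contra hM
    exact hne (h.R_bot (h.qp _ inf_le_left (Amal.cent_nz _ _ hXP0) hM _
      (inf_le_right.trans (Amal.cent_le_nz hRP0)) h.TNR))
  set Z := S ⊓ centralizer (S : Set 𝒢) with hZ
  have hZT0 : Z ≤ T0 := by
    refine le_trans (le_inf (inf_le_left.trans (sT.1.trans h.TX)) ?_) hcP0
    exact inf_le_right.trans (centralizer_le hP0S)
  -- (b)
  set V := P0 ⊓ centralizer (P0 : Set 𝒢) with hV
  have hZV : Z ≤ V := by
    refine le_inf ?_ (inf_le_right.trans (centralizer_le hP0S))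
    rw [← hSP0]; exact le_inf inf_le_left hZT0
  have hXV : X ≤ normalizer (V : Set 𝒢) := by
    have h1 := Amal.cent_nz X P0 hXP0
    have h2 : V = P0 ⊓ (X ⊓ centralizer (P0 : Set 𝒢)) := by
      rw [← inf_assoc, inf_eq_left.2 (s0.1.trans (h.T0T.trans h.TX))]
    rw [h2]; exact nz_inf hXP0 h1
  have hcV : X ⊓ centralizer (V : Set 𝒢) ≤ T0 := by
    by_contra hM
    have hTZ : T ≤ normalizer (Z : Set 𝒢) := by
      have h1 := Amal.cent_nz T S hTS
      have h2 : Z = S ⊓ (T ⊓ centralizer (S : Set 𝒢)) := by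
        rw [← inf_assoc, inf_eq_left.2 sT.1]
      rw [h2]; exact nz_inf hTS h1
    have htZ : cj t Z = Z := by
      ext a
      have hmem : ∀ b, b ∈ S ↔ t⁻¹ * b * t ∈ S := by
        intro b; rw [← mem_cj, htS]
      rw [mem_cj, hZ, Subgroup.mem_inf, Subgroup.mem_inf, ← hmem, mem_centralizer_iff,
        mem_centralizer_iff]
      refine and_congr_right fun _ => ⟨fun hc b hb => ?_, fun hc b hb => ?_⟩
      · have h1 := hc _ ((hmem b).1 hb)
        have h2 : t * (t⁻¹ * b * t * (t⁻¹ * a * t)) * t⁻¹ =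
          t * (t⁻¹ * a * t * (t⁻¹ * b * t)) * t⁻¹ := by rw [h1]
        simpa [mul_assoc] using h2
      · have h0 : t * b * t⁻¹ ∈ S := by
          apply (hmem _).2; simpa [mul_assoc] using hb
        have h1 := hc _ h0
        have h2 : t⁻¹ * (t * b * t⁻¹ * a) * t = t⁻¹ * (a * (t * b * t⁻¹)) * t := by rw [h1]
        simpa [mul_assoc] using h2
    have hZbot := h.faith Z (hZT0.trans h.T0T) (h.qp _ inf_le_left (Amal.cent_nz _ _ hXV) hM _
      (inf_le_right.trans (Amal.cent_le_nz hZV)) hTZ) htZ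
    have : Nontrivial S := (Subgroup.nontrivial_iff_ne_bot S).2 hSne
    have hcn := sT.2.2.center_nontrivial
    obtain ⟨z, hz⟩ := exists_ne (1 : Subgroup.center S)
    have hzZ : z.1.1 ∈ Z := by
      refine Subgroup.mem_inf.2 ⟨z.1.2, ?_⟩
      rw [mem_centralizer_iff]
      intro b hb
      exact congrArg Subtype.val (Subgroup.mem_center_iff.1 z.2 ⟨b, hb⟩)
    rw [hZbot, Subgroup.mem_bot] at hzZ
    exact hz (Subtype.ext (Subtype.ext hzZ))
  -- (c)
  have hex : ∃ A, JQ A S ∧ ¬ A ≤ T0 := by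
    by_contra! hall
    have hsub : ∀ A, JQ A S → A ≤ P0 := fun A hA => by
      rw [← hSP0]; exact le_inf hA.1 (hall A hA)
    have hs : {A | JQ A S} = {A | JQ A P0} := by
      ext A
      simp only [Set.mem_ofPred_eq]
      constructor
      · intro hA
        exact ⟨hsub A hA, hA.2.1, fun B hB => hA.2.2 B (hB.trans hP0S)⟩
      · intro hA
        obtain ⟨B, hB⟩ := exists_JQ S
        refine ⟨hA.1.trans hP0S, hA.2.1, fun C hC hc => ?_⟩
        exact (hB.2.2 C hC hc).trans (hA.2.2 B (hsub B hB) hB.2.1)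
    have he : FQ JQ S = FQ JQ P0 := by unfold FQ; rw [hs]
    obtain ⟨A, hA⟩ := exists_JQ S
    have hbot : FQ JQ S = ⊥ := by
      refine h.faith _ (sSup_le fun A hA => hA.1.trans sT.1) ?_ ?_
      · rw [he]; exact hXP0.trans (FQ_nz JQ_cinv _)
      · rw [FQ_cj JQ_cinv, htS]
    have h1 : A ≤ FQ JQ S := le_sSup hA
    rw [hbot, le_bot_iff] at h1
    exact JQ_ne_bot hA hSne h1
  obtain ⟨A, hA, hAT0⟩ := hex
  have hAX : A ≤ X := hA.1.trans (sT.1.trans h.TX)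
  obtain ⟨a, haA, haT0⟩ := SetLike.not_le_iff_exists.1 hAT0
  set A0 := A ⊓ T0 with hA0
  have hA0P0 : A0 ≤ P0 := by rw [← hSP0]; exact inf_le_inf_right _ hA.1
  -- index of A0 in A
  have hidxA : Nat.card A ≤ 3 * Nat.card A0 := by
    let ψ : A →* Equiv.Perm (Fin 5) := φ.comp (Subgroup.inclusion hAX)
    have hkerψ : ψ.ker = T0.subgroupOf A := by
      ext b
      rw [MonoidHom.mem_ker, Subgroup.mem_subgroupOf]
      exact hker _
    have hc1 : Nat.card A0 = Nat.card ψ.ker := by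
      rw [hkerψ, hA0, inf_comm]
      rw [← Subgroup.inf_subgroupOf_right]
      exact (Nat.card_congr (Subgroup.subgroupOfEquivOfLe (inf_le_right : T0 ⊓ A ≤ A)).toEquiv).symm
    have hrange : Nat.card ψ.range ≤ 3 := by
      have hp : IsPGroup 3 ψ.range :=
        (sT.2.2.to_le hA.1).of_surjective ψ.rangeRestrict ψ.rangeRestrict_surjective
      obtain ⟨n, hn⟩ := IsPGroup.iff_card.1 hp
      have hd := Subgroup.card_subgroup_dvd_card ψ.range
      rw [Nat.card_perm, Nat.card_fin, hn] at hd
      rw [hn]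
      rcases n with _ | _ | n
      · norm_num
      · norm_num
      · exfalso
        have h9 : 9 ∣ Nat.factorial 5 := dvd_trans ⟨3 ^ n, by ring⟩ hd
        revert h9; decide
    have h2 := ψ.ker.card_mul_index
    rw [Subgroup.index_ker] at h2
    rw [hc1, ← h2, mul_comm]
    exact Nat.mul_le_mul_right _ hrange
  have hVA0 : ∀ v ∈ V, ∀ b ∈ A0, v * b = b * v := by
    intro v hv b hb
    exact ((mem_centralizer_iff.1 hv.2) b (hA0P0 hb)).symm
  have hVcomm : ∀ v ∈ V, ∀ w ∈ V, v * w = w * v := by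
    intro v hv w hw
    exact ((mem_centralizer_iff.1 hv.2) w hw.1).symm
  have hA0N : V ≤ normalizer (A0 : Set 𝒢) := by
    rw [le_nz]; intro v hv b hb; rw [hVA0 v hv b hb]; simpa using hb
  have hmul : ((V ⊔ A0 : Subgroup 𝒢) : Set 𝒢) = (V : Set 𝒢) * (A0 : Set 𝒢) :=
    Subgroup.coe_mul_of_left_le_normalizer_right _ _ hA0N
  have hcardVA : Nat.card (V ⊔ A0 : Subgroup 𝒢) ≤ Nat.card A := by
    refine hA.2.2 _ (sup_le (inf_le_left.trans hP0S) (hA0P0.trans hP0S)) ?_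
    intro u hu w hw
    rw [← SetLike.mem_coe, hmul] at hu hw
    obtain ⟨v1, hv1, b1, hb1, rfl⟩ := hu
    obtain ⟨v2, hv2, b2, hb2, rfl⟩ := hw
    have c1 : Commute v1 v2 := hVcomm v1 hv1 v2 hv2
    have c2 : Commute v1 b2 := hVA0 v1 hv1 b2 hb2
    have c3 : Commute b1 v2 := (hVA0 v2 hv2 b1 hb1).symm
    have c4 : Commute b1 b2 := hA.2.1 b1 hb1.1 b2 hb2.1
    exact ((c1.mul_right c2).mul_left (c3.mul_right c4)).eq
  have hcardV : Nat.card V ≤ 3 * Nat.card (A0 ⊓ V : Subgroup 𝒢) := by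
    have h1 : Nat.card A0 * Nat.card V ≤
        Nat.card (V ⊔ A0 : Subgroup 𝒢) * Nat.card (A0 ⊓ V : Subgroup 𝒢) := by
      have e1 : A0.relIndex V ≤ A0.relIndex (V ⊔ A0) :=
        Subgroup.relIndex_le_of_le_right le_sup_left Subgroup.index_ne_zero_of_finite
      have e2 := relIndex_mul_card_aux A0 (V ⊔ A0) le_sup_right
      have e3 := relIndex_mul_card_aux (A0 ⊓ V) V inf_le_right
      rw [Subgroup.inf_relIndex_right] at e3
      rw [← e2, ← e3]
      calc _ = A0.relIndex V * (Nat.card A0 * Nat.card (A0 ⊓ V : Subgroup 𝒢)) := by ring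
        _ ≤ A0.relIndex (V ⊔ A0) * (Nat.card A0 * Nat.card (A0 ⊓ V : Subgroup 𝒢)) :=
          Nat.mul_le_mul_right _ e1
        _ = _ := by ring
    have hpos : 0 < Nat.card A0 := Nat.card_pos
    have h2 : Nat.card A0 * Nat.card V ≤ Nat.card A0 * (3 * Nat.card (A0 ⊓ V : Subgroup 𝒢)) := by
      calc _ ≤ Nat.card (V ⊔ A0 : Subgroup 𝒢) * Nat.card (A0 ⊓ V : Subgroup 𝒢) := h1
        _ ≤ (3 * Nat.card A0) * Nat.card (A0 ⊓ V : Subgroup 𝒢) :=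
          Nat.mul_le_mul_right _ (hcardVA.trans hidxA)
        _ = _ := by ring
    exact Nat.le_of_mul_le_mul_left h2 hpos
  have hidxa : (centralizer {a}).relIndex V ≤ 3 := by
    have h1 : A0 ⊓ V ≤ centralizer {a} ⊓ V := by
      refine le_inf ?_ inf_le_right
      intro b hb
      rw [mem_centralizer_singleton_iff]
      exact hA.2.1 b hb.1.1 a haA
    have h2 := relIndex_mul_card_aux (centralizer {a} ⊓ V) V inf_le_right
    rw [Subgroup.inf_relIndex_right] at h2
    have h3 : Nat.card (A0 ⊓ V : Subgroup 𝒢) ≤ Nat.card (centralizer {a} ⊓ V : Subgroup 𝒢) :=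
      Subgroup.card_le_of_le h1
    have hpos : 0 < Nat.card (centralizer {a} ⊓ V : Subgroup 𝒢) := Nat.card_pos
    by_contra hlt
    have : 4 * Nat.card (centralizer {a} ⊓ V : Subgroup 𝒢) ≤ Nat.card V := by
      rw [← h2]; exact Nat.mul_le_mul_right _ (by omega)
    omega
  -- (d)
  have haX : a ∈ X := hAX haA
  obtain ⟨s, hs5, hs1⟩ := three_elt (φ ⟨a, haX⟩) (fun h1 => haT0 ((hker _).1 h1)) (by
    obtain ⟨k, hk⟩ := sT.2.2 ⟨a, hA.1 haA⟩
    refine ⟨k, ?_⟩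
    rw [← map_pow]
    have : (⟨a, haX⟩ : X) ^ 3 ^ k = 1 := Subtype.ext (by simpa using congrArg Subtype.val hk)
    rw [this, map_one])
  obtain ⟨⟨g, hg⟩, rfl⟩ := hφ s
  set b := g * a * g⁻¹ with hb
  have hidxb : (centralizer {b}).relIndex V ≤ 3 := by
    have hVg : cj g V = V := mem_nz.1 (hXV hg)
    have h1 : (centralizer {b}) ⊓ V = cj g (centralizer {a} ⊓ V) := by
      rw [cj_inf, hVg]
      congr 1
      ext c
      rw [mem_cj, mem_centralizer_singleton_iff, mem_centralizer_singleton_iff, hb]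
      constructor
      · intro h1
        have h2 : g⁻¹ * (c * (g * a * g⁻¹)) * g = g⁻¹ * (g * a * g⁻¹ * c) * g := by rw [h1]
        simpa [mul_assoc] using h2
      · intro h1
        have h2 : g * (g⁻¹ * c * g * a) * g⁻¹ = g * (a * (g⁻¹ * c * g)) * g⁻¹ := by rw [h1]
        simpa [mul_assoc] using h2
    have h2 := relIndex_mul_card_aux (centralizer {a} ⊓ V) V inf_le_right
    have h3 := relIndex_mul_card_aux (centralizer {b} ⊓ V) V inf_le_right
    rw [Subgroup.inf_relIndex_right] at h2 h3
    rw [h1, card_cj, ← h2] at h3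
    have := Nat.eq_of_mul_eq_mul_right Nat.card_pos h3
    rw [this]; exact hidxa
  have hbX : b ∈ X := X.mul_mem (X.mul_mem hg haX) (X.inv_mem hg)
  set d : X := ⟨a * b, X.mul_mem haX hbX⟩ with hd
  have hφd : φ d = φ ⟨a, haX⟩ * (φ ⟨g, hg⟩ * φ ⟨a, haX⟩ * (φ ⟨g, hg⟩)⁻¹) := by
    rw [← map_inv, ← map_mul, ← map_mul, ← map_mul]; rfl
  rw [← hφd] at hs5 hs1
  have hdpos : 0 < orderOf d := orderOf_pos _
  obtain ⟨k, m, hm, hkm⟩ := Nat.exists_eq_pow_mul_and_not_dvd hdpos.ne' 5 (by norm_num)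
  have hdm : (d ^ m) ^ 5 ^ k = 1 := by
    rw [← pow_mul, mul_comm, ← hkm, pow_orderOf_eq_one]
  have hdmT0 : (d ^ m).1 ∉ T0 := by
    rw [← hker, map_pow]
    intro h1
    have := Fact.mk Nat.prime_five
    have h2 : orderOf (φ d) = 5 := orderOf_eq_prime hs5 hs1
    have h3 := orderOf_dvd_of_pow_eq_one h1
    rw [h2] at h3; exact hm h3
  apply hdmT0
  apply hcV
  refine Subgroup.mem_inf.2 ⟨(d ^ m).2, ?_⟩
  have hlast : V ≤ centralizer {(d ^ m).1} := by
    refine five_cent (s0.2.2.to_le inf_le_left) (hXV (d ^ m).2) ⟨k, ?_⟩ ?_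
    · simpa using congrArg Subtype.val hdm
    · have hle : centralizer {a} ⊓ centralizer {b} ≤ centralizer {(d ^ m).1} := by
        rintro c ⟨hca, hcb⟩
        have c1 : Commute c a := mem_centralizer_singleton_iff.1 hca
        have c2 : Commute c b := mem_centralizer_singleton_iff.1 hcb
        rw [mem_centralizer_singleton_iff]
        have : Commute c ((a * b) ^ m) := (c1.mul_right c2).pow_right m
        simpa [hd] using this.eq
      calc (centralizer {(d ^ m).1}).relIndex V
          ≤ (centralizer {a} ⊓ centralizer {b}).relIndex V :=
            Nat.le_of_dvd (Nat.pos_of_ne_zero Subgroup.index_ne_zero_of_finite)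
              (Subgroup.relIndex_dvd_of_le_left V hle)
        _ ≤ _ := Subgroup.relIndex_inf_le
        _ ≤ 3 * 3 := Nat.mul_le_mul hidxa hidxb
  rw [mem_centralizer_iff]
  intro v hv
  exact mem_centralizer_singleton_iff.1 (hlast hv)

end five

open Subgroup

section permfacts

lemma perm_trans {n : ℕ} (hn : 5 ≤ n) (N : Subgroup (Equiv.Perm (Fin n))) (hN : N.Normal)
    (hne : N ≠ ⊥) (σ : Equiv.Perm (Fin n)) (a b : Fin n) :
    ∃ m ∈ N, m a = σ a ∧ m b = σ b := by
  have hle : alternatingGroup (Fin n) ≤ N :=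
    Equiv.Perm.alternatingGroup_le_of_normal (by simpa using hn)
      ((Subgroup.nontrivial_iff_ne_bot N).2 hne)
  rcases Int.units_eq_one_or (Equiv.Perm.sign σ) with hs | hs
  · exact ⟨σ, hle (Equiv.Perm.mem_alternatingGroup.2 hs), rfl, rfl⟩
  · have hcard : 1 < (({a, b} : Finset (Fin n))ᶜ).card := by
      rw [Finset.card_compl, Fintype.card_fin]
      have : ({a, b} : Finset (Fin n)).card ≤ 2 := Finset.card_le_two
      omega
    obtain ⟨c, hc, d, hd, hcd⟩ := Finset.one_lt_card.1 hcard
    simp only [Finset.mem_compl, Finset.mem_insert, Finset.mem_singleton, not_or] at hc hd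
    refine ⟨σ * Equiv.swap c d, hle (Equiv.Perm.mem_alternatingGroup.2 ?_), ?_, ?_⟩
    · rw [map_mul, hs, Equiv.Perm.sign_swap hcd]; decide
    · rw [Equiv.Perm.mul_apply, Equiv.swap_apply_of_ne_of_ne (Ne.symm hc.1) (Ne.symm hd.1)]
    · rw [Equiv.Perm.mul_apply, Equiv.swap_apply_of_ne_of_ne (Ne.symm hc.2) (Ne.symm hd.2)]

lemma prime_of_pow {𝒢 : Type*} [Group 𝒢] {N : Subgroup 𝒢} {p q : ℕ} (hp : p.Prime)
    (hq : q.Prime) (hN : IsPGroup p N) {u : 𝒢} (hu : u ∈ N) (hu1 : u ≠ 1) (huq : u ^ q = 1) :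
    p = q := by
  have := Fact.mk hq
  have h2 : orderOf u = q := orderOf_eq_prime huq hu1
  obtain ⟨k, hk⟩ := hN ⟨u, hu⟩
  have h3 : u ^ p ^ k = 1 := by simpa using congrArg Subtype.val hk
  have h4 := orderOf_dvd_of_pow_eq_one h3
  rw [h2] at h4
  exact ((Nat.prime_dvd_prime_iff_eq hq hp).1 (hq.dvd_of_dvd_pow h4)).symm

lemma fin4_elt : ∀ τ : Equiv.Perm (Fin 4), τ ≠ 1 → ∃ σ : Equiv.Perm (Fin 4),
    τ * (σ * τ * σ⁻¹) ≠ 1 ∧ (τ * (σ * τ * σ⁻¹)) ^ 2 = 1 := by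
  set_option maxRecDepth 100000 in
  decide

lemma fin3_elt : ∀ τ : Equiv.Perm (Fin 3), τ ≠ 1 → ∃ σ : Equiv.Perm (Fin 3),
    τ * (σ * τ * σ⁻¹) ≠ 1 ∧ (τ * (σ * τ * σ⁻¹)) ^ 3 = 1 := by
  set_option maxRecDepth 100000 in
  decide

lemma small_elt {α : Type*} {m q : ℕ} (e : α ≃ Fin m)
    (hm : ∀ τ : Equiv.Perm (Fin m), τ ≠ 1 → ∃ σ : Equiv.Perm (Fin m),
      τ * (σ * τ * σ⁻¹) ≠ 1 ∧ (τ * (σ * τ * σ⁻¹)) ^ q = 1)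
    {N : Subgroup (Equiv.Perm α)} (hN : N.Normal) (hne : N ≠ ⊥) :
    ∃ u ∈ N, u ≠ 1 ∧ u ^ q = 1 := by
  obtain ⟨⟨τ, hτ⟩, hτ1⟩ := (Subgroup.ne_bot_iff_exists_ne_one).1 hne
  have hτ1' : τ ≠ 1 := fun h => hτ1 (Subtype.ext h)
  let E : Equiv.Perm α ≃* Equiv.Perm (Fin m) := e.permCongrHom
  obtain ⟨σ, h1, h2⟩ := hm (E τ) (by rwa [ne_eq, map_eq_one_iff E E.injective])
  refine ⟨τ * (E.symm σ * τ * (E.symm σ)⁻¹), N.mul_mem hτ (hN.conj_mem _ hτ _), ?_, ?_⟩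
  · intro h; apply h1
    have := congrArg E h
    simpa using this
  · apply E.injective
    simpa using h2

lemma normal_pgroup {α : Type*} [Fintype α] [DecidableEq α] {p : ℕ} (hp : p.Prime)
    (h3 : 3 ≤ Fintype.card α) {N : Subgroup (Equiv.Perm α)} (hN : N.Normal) (hne : N ≠ ⊥)
    (hNp : IsPGroup p N) :
    (Fintype.card α = 3 ∧ p = 3) ∨ (Fintype.card α = 4 ∧ p = 2) := by
  rcases Nat.lt_or_ge (Fintype.card α) 5 with h5 | h5
  · obtain h | h : Fintype.card α = 3 ∨ Fintype.card α = 4 := by omega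
    · obtain ⟨u, hu, hu1, huq⟩ := small_elt (Fintype.equivFinOfCardEq h) fin3_elt hN hne
      exact Or.inl ⟨h, prime_of_pow hp Nat.prime_three hNp hu hu1 huq⟩
    · obtain ⟨u, hu, hu1, huq⟩ := small_elt (Fintype.equivFinOfCardEq h) fin4_elt hN hne
      exact Or.inr ⟨h, prime_of_pow hp Nat.prime_two hNp hu hu1 huq⟩
  · exfalso
    have hle : alternatingGroup α ≤ N :=
      Equiv.Perm.alternatingGroup_le_of_normal (by simpa using h5)
        ((Subgroup.nontrivial_iff_ne_bot N).2 hne)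
    have key : ∀ q : ℕ, q.Prime → q ∣ Nat.card (alternatingGroup α) → p = q := by
      intro q hq hd
      have := Fact.mk hq
      obtain ⟨u, hu⟩ := exists_prime_orderOf_dvd_card' q hd
      refine prime_of_pow hp hq hNp (hle u.2) ?_ ?_
      · intro h
        have : u = 1 := Subtype.ext h
        rw [this, orderOf_one] at hu
        exact hq.one_lt.ne hu
      · have := pow_orderOf_eq_one u
        rw [hu] at this
        simpa using congrArg Subtype.val this
    have : Nontrivial α := Fintype.one_lt_card_iff_nontrivial.1 (by omega)
    have hcard := two_mul_nat_card_alternatingGroup (α := α)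
    rw [Nat.card_perm, Nat.card_eq_fintype_card (α := α)] at hcard
    have h120 : Nat.factorial 5 ∣ Nat.factorial (Fintype.card α) := Nat.factorial_dvd_factorial h5
    rw [← hcard] at h120
    have h60 : 60 ∣ Nat.card (alternatingGroup α) := by
      have : Nat.factorial 5 = 2 * 60 := rfl
      rw [this] at h120
      exact Nat.dvd_of_mul_dvd_mul_left (by norm_num) h120
    have e2 := key 2 Nat.prime_two (dvd_trans (by norm_num) h60)
    have e3 := key 3 Nat.prime_three (dvd_trans (by norm_num) h60)
    omega

/-- nontrivial `p`-subgroups normal in a two-point stabiliser -/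
lemma stab_pgroup {n p : ℕ} (hn : 5 ≤ n) (hp : p.Prime) {a b : Fin n} (hab : a ≠ b)
    {N : Subgroup (Equiv.Perm (Fin n))} (hfix : ∀ u ∈ N, u a = a ∧ u b = b)
    (hnorm : ∀ s : Equiv.Perm (Fin n), s a = a → s b = b → ∀ u ∈ N, s * u * s⁻¹ ∈ N)
    (hne : N ≠ ⊥) (hNp : IsPGroup p N) : (n = 5 ∧ p = 3) ∨ (n = 6 ∧ p = 2) := by
  let f : Equiv.Perm {c : Fin n // c ≠ a ∧ c ≠ b} →* Equiv.Perm (Fin n) := Equiv.Perm.ofSubtype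
  have hf : Function.Injective f := Equiv.Perm.ofSubtype_injective
  have hfa : ∀ s, f s a = a := fun s => Equiv.Perm.ofSubtype_apply_of_not_mem _ (by simp)
  have hfb : ∀ s, f s b = b := fun s => Equiv.Perm.ofSubtype_apply_of_not_mem _ (by simp)
  have hcard : Fintype.card {c : Fin n // c ≠ a ∧ c ≠ b} = n - 2 := by
    rw [Fintype.card_subtype]
    have : (Finset.univ.filter fun c : Fin n => c ≠ a ∧ c ≠ b) = ({a, b} : Finset (Fin n))ᶜ := by
      ext c; simp
    rw [this, Finset.card_compl, Fintype.card_fin, Finset.card_pair hab]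
  have := normal_pgroup (α := {c : Fin n // c ≠ a ∧ c ≠ b}) (N := N.comap f) hp (by omega)
    ⟨fun u hu s => by
      rw [Subgroup.mem_comap, map_mul, map_mul, map_inv]
      exact hnorm _ (hfa s) (hfb s) _ hu⟩
    (by
      obtain ⟨⟨u, hu⟩, hu1⟩ := (Subgroup.ne_bot_iff_exists_ne_one).1 hne
      have hua := hfix u hu
      have h1 : ∀ c, (u c ≠ a ∧ u c ≠ b) ↔ (c ≠ a ∧ c ≠ b) := by
        intro c
        have e1 := u.injective.eq_iff (a := c) (b := a)
        have e2 := u.injective.eq_iff (a := c) (b := b)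
        rw [hua.1] at e1
        rw [hua.2] at e2
        rw [ne_eq, ne_eq, e1, e2]
      have h2 : f (u.subtypePerm h1) = u := by
        apply Equiv.Perm.ofSubtype_subtypePerm
        intro c hc
        refine ⟨fun h => hc ?_, fun h => hc ?_⟩
        · rw [h, hua.1]
        · rw [h, hua.2]
      intro hbot
      have h3 : u.subtypePerm h1 ∈ N.comap f := by rw [Subgroup.mem_comap, h2]; exact hu
      rw [hbot, Subgroup.mem_bot] at h3
      rw [h3, map_one] at h2
      exact hu1 (Subtype.ext h2.symm))
    (hNp.comap_of_injective f hf)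
  omega

end permfacts

open Subgroup

section graph
variable {V : Type*} {Γ : SimpleGraph V} {G : Subgroup (Equiv.Perm V)}

lemma conn_ind (hconn : Γ.Connected) (P : V → Prop) {x : V} (hx : P x)
    (hs : ∀ v w, P v → Γ.Adj v w → P w) (v : V) : P v := by
  obtain ⟨p⟩ := hconn.preconnected x v
  induction p with
  | nil => exact hx
  | cons h p ih => exact ih (hs _ _ hx h)

lemma mem_ball (hconn : Γ.Connected) {x : V} {g : G} :
    g ∈ ballStab Γ G x 1 ↔ g • x = x ∧ ∀ v, Γ.Adj x v → g • v = v := by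
  simp only [ballStab, Subgroup.mem_iInf, MulAction.mem_stabilizer_iff]
  constructor
  · intro h
    refine ⟨h x (by simp), fun v hv => h v ?_⟩
    rw [SimpleGraph.dist_eq_one_iff_adj.2 hv]
  · rintro ⟨h1, h2⟩ v hv
    rcases Nat.lt_or_ge (Γ.dist x v) 1 with h | h
    · have h0 : Γ.dist x v = 0 := by omega
      rw [hconn.dist_eq_zero_iff] at h0
      rw [← h0]; exact h1
    · exact h2 v (SimpleGraph.dist_eq_one_iff_adj.1 (by omega))

lemma adj_smul (hp : PreservesAdj Γ G) (g : G) (u v : V) :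
    Γ.Adj (g • u) (g • v) ↔ Γ.Adj u v := (hp g.1 g.2 u v).symm

lemma cj_stab (g : G) (x : V) : cj g (stabilizer G x) = stabilizer G (g • x) := by
  ext a
  rw [mem_cj, MulAction.mem_stabilizer_iff, MulAction.mem_stabilizer_iff, mul_smul, mul_smul,
    inv_smul_eq_iff]

lemma cj_ball (hconn : Γ.Connected) (hp : PreservesAdj Γ G) (g : G) (x : V) :
    cj g (ballStab Γ G x 1) = ballStab Γ G (g • x) 1 := by
  ext a
  rw [mem_cj, mem_ball hconn, mem_ball hconn]
  refine and_congr ?_ ⟨fun h v hv => ?_, fun h v hv => ?_⟩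
  · rw [mul_smul, mul_smul, inv_smul_eq_iff]
  · have h1 := h (g⁻¹ • v) (by rw [← adj_smul hp g]; simpa using hv)
    simpa [mul_smul, inv_smul_eq_iff] using h1
  · have h1 := h (g • v) ((adj_smul hp g _ _).2 hv)
    rw [mul_smul, mul_smul, inv_smul_eq_iff]; exact h1

/-- local data at a vertex -/
structure LD (n : ℕ) (Γ : SimpleGraph V) (G : Subgroup (Equiv.Perm V)) (x : V)
    (e : Γ.neighborSet x ≃ OPairs n)
    (φ : MulAction.stabilizer G x →* Equiv.Perm (Fin n)) : Prop where
  surj : Function.Surjective φ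
  act : ∀ (g : MulAction.stabilizer G x) (v : Γ.neighborSet x),
      ((e.symm (φ g • e v) : Γ.neighborSet x) : V) = g • (v : V)

variable {n : ℕ} {x : V} {e : Γ.neighborSet x ≃ OPairs n}
  {φ : MulAction.stabilizer G x →* Equiv.Perm (Fin n)}

lemma LD.smul_iff (h : LD n Γ G x e φ) (g : stabilizer G x) (v w : Γ.neighborSet x) :
    φ g • e v = e w ↔ g.1 • (v : V) = w := by
  have h1 := h.act g v
  have h2 : g • (v : V) = g.1 • (v : V) := rfl
  rw [← h2, ← h1]
  rw [← Equiv.symm_apply_eq]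
  constructor
  · intro h3; rw [h3]
  · intro h3; exact Subtype.ext h3

lemma opair_smul_iff (σ : Equiv.Perm (Fin n)) (p q : OPairs n) :
    σ • p = q ↔ σ p.1.1 = q.1.1 ∧ σ p.1.2 = q.1.2 := by
  constructor
  · rintro rfl; exact ⟨rfl, rfl⟩
  · rintro ⟨h1, h2⟩; exact Subtype.ext (Prod.ext h1 h2)

lemma LD.ker (h : LD n Γ G x e φ) (hconn : Γ.Connected) (hn : 2 ≤ n) (g : stabilizer G x) :
    φ g = 1 ↔ g.1 ∈ ballStab Γ G x 1 := by
  rw [mem_ball hconn]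
  constructor
  · intro h1
    refine ⟨g.2, fun v hv => ?_⟩
    have := (h.smul_iff g ⟨v, hv⟩ ⟨v, hv⟩).1 (by rw [h1, one_smul])
    exact this
  · rintro ⟨-, h2⟩
    have hall : ∀ p : OPairs n, φ g • p = p := by
      intro p
      have := (h.smul_iff g (e.symm p) (e.symm p)).2 (h2 _ (e.symm p).2)
      simpa using this
    ext a : 1
    have : Nontrivial (Fin n) := Fin.nontrivial_iff_two_le.2 hn
    obtain ⟨b, hb⟩ := exists_ne a
    exact ((opair_smul_iff _ _ _).1 (hall ⟨(a, b), hb.symm⟩)).1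

lemma opair_trans (p q : OPairs n) : ∃ σ : Equiv.Perm (Fin n), σ • p = q := by
  obtain ⟨⟨a, b⟩, hab⟩ := p
  obtain ⟨⟨c, d⟩, hcd⟩ := q
  simp only at hab hcd
  have h1 : Equiv.swap a c b ≠ c := by
    intro h
    have h2 : Equiv.swap a c b = Equiv.swap a c a := by rw [h, Equiv.swap_apply_left]
    exact hab ((Equiv.swap a c).injective h2).symm
  refine ⟨Equiv.swap (Equiv.swap a c b) d * Equiv.swap a c, (opair_smul_iff _ _ _).2 ⟨?_, ?_⟩⟩
  · show Equiv.swap (Equiv.swap a c b) d (Equiv.swap a c a) = c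
    rw [Equiv.swap_apply_left, Equiv.swap_apply_of_ne_of_ne h1.symm hcd]
  · show Equiv.swap (Equiv.swap a c b) d (Equiv.swap a c b) = d
    rw [Equiv.swap_apply_left]

lemma LD.trans (h : LD n Γ G x e φ) {v w : V} (hv : Γ.Adj x v) (hw : Γ.Adj x w) :
    ∃ g ∈ stabilizer G x, g • v = w := by
  obtain ⟨σ, hσ⟩ := opair_trans (e ⟨v, hv⟩) (e ⟨w, hw⟩)
  obtain ⟨g, rfl⟩ := h.surj σ
  exact ⟨g.1, g.2, (h.smul_iff _ _ _).1 hσ⟩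

lemma exists_flip (hp : PreservesAdj Γ G) (htr : MulAction.IsPretransitive G V)
    {y : V} {e' : Γ.neighborSet y ≃ OPairs n}
    {φ' : MulAction.stabilizer G y →* Equiv.Perm (Fin n)} (h : LD n Γ G y e' φ')
    (hxy : Γ.Adj x y) : ∃ t : G, t • x = y ∧ t • y = x := by
  obtain ⟨g, hg⟩ := MulAction.exists_smul_eq G x y
  have h1 : Γ.Adj y (g • y) := by
    have := (adj_smul hp g x y).2 hxy
    rwa [hg] at this
  obtain ⟨k, hk, hk2⟩ := h.trans h1 hxy.symm
  refine ⟨k * g, ?_, ?_⟩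
  · rw [mul_smul, hg]; exact hk
  · rw [mul_smul]; exact hk2

lemma graph_amal (hconn : Γ.Connected) (hp : PreservesAdj Γ G) (hn : 5 ≤ n)
    (h : LD n Γ G x e φ) {y : V} (hxy : Γ.Adj x y) {t : G} (hx : t • x = y) (hy : t • y = x) :
    Amal (stabilizer G x) (stabilizer G x ⊓ stabilizer G y) (ballStab Γ G x 1) t where
  TX := inf_le_left
  T0T := fun g hg => by
    rw [mem_ball hconn] at hg
    exact Subgroup.mem_inf.2 ⟨hg.1, hg.2 y hxy⟩
  XN0 := fun g hg => by
    rw [mem_nz, cj_ball hconn hp, MulAction.mem_stabilizer_iff.1 hg]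
  tT := by rw [cj_inf, cj_stab, cj_stab, hx, hy, inf_comm]
  tt := by rw [cj_ball hconn hp, cj_ball hconn hp, hx, hy]
  faith := by
    intro H hHT hXH htH
    have hall : ∀ v : V, ∃ g ∈ normalizer (H : Set G), g • x = v := by
      refine conn_ind hconn _ ⟨1, one_mem _, one_smul _ _⟩ ?_
      rintro v w ⟨g, hg, rfl⟩ hvw
      have h1 : Γ.Adj x (g⁻¹ • w) := by rw [← adj_smul hp g]; simpa using hvw
      obtain ⟨s, hs, hs2⟩ := h.trans hxy h1
      refine ⟨g * s * t, mul_mem (mul_mem hg (hXH hs)) (mem_nz.2 htH), ?_⟩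
      rw [mul_smul, mul_smul, hx, hs2, smul_inv_smul]
    rw [eq_bot_iff]
    intro a ha
    rw [Subgroup.mem_bot]
    apply Subtype.ext
    apply Equiv.ext
    intro v
    obtain ⟨g, hg, rfl⟩ := hall v
    have h1 : g⁻¹ * a * g ∈ H := by rw [← mem_cj, mem_nz.1 hg]; exact ha
    have h2 : (g⁻¹ * a * g) • x = x := (Subgroup.mem_inf.1 (hHT h1)).1
    rw [mul_smul, mul_smul, inv_smul_eq_iff] at h2
    exact h2
  qp := by
    intro M hMX hXM hMT0 H hMH hTH g hg
    let N := (M.subgroupOf (stabilizer G x)).map φ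
    have hN : N.Normal := by
      refine ⟨?_⟩
      rintro _ ⟨m, hm, rfl⟩ s
      obtain ⟨k, rfl⟩ := h.surj s
      refine ⟨k * m * k⁻¹, ?_, by simp⟩
      exact le_nz.1 hXM k.1 k.2 m.1 hm
    have hNne : N ≠ ⊥ := by
      intro hb
      apply hMT0
      intro m hm
      have h1 : φ ⟨m, hMX hm⟩ ∈ N := ⟨⟨m, hMX hm⟩, hm, rfl⟩
      rw [hb, Subgroup.mem_bot] at h1
      exact (h.ker hconn (by omega) _).1 h1
    set p := e ⟨y, hxy⟩ with hpdef
    obtain ⟨m, ⟨m', hm', rfl⟩, hm1, hm2⟩ := perm_trans hn N hN hNne (φ ⟨g, hg⟩) p.1.1 p.1.2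
    have h1 : φ (m'⁻¹ * ⟨g, hg⟩) • p = p := by
      rw [map_mul, map_inv, mul_smul, inv_smul_eq_iff, opair_smul_iff]
      exact ⟨hm1.symm, hm2.symm⟩
    have h2 := (h.smul_iff _ _ _).1 h1
    have h3 : m'.1⁻¹ * g ∈ normalizer (H : Set G) :=
      hTH (Subgroup.mem_inf.2 ⟨(m'⁻¹ * ⟨g, hg⟩ : stabilizer G x).2, h2⟩)
    have h4 := mul_mem (hMH hm') h3
    simpa using h4

lemma fin4_fix : ∀ (σ : Equiv.Perm (Fin 4)) (a b : Fin 4), a ≠ b → σ a = a → σ b = b →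
    σ ^ 2 = 1 := by
  set_option maxRecDepth 100000 in
  decide

lemma ball_step (hconn : Γ.Connected) {x : V} {e : Γ.neighborSet x ≃ OPairs 4}
    {φ : MulAction.stabilizer G x →* Equiv.Perm (Fin 4)} (h : LD 4 Γ G x e φ) {v : V}
    (hv : Γ.Adj v x) {g : G} (hg : g ∈ ballStab Γ G v 1) {m : ℕ} (hm : ¬ 2 ∣ m)
    (hgm : g ^ m = 1) : g ∈ ballStab Γ G x 1 := by
  rw [mem_ball hconn] at hg
  have hgx : g ∈ stabilizer G x := hg.2 x hv
  have h1 := (h.smul_iff ⟨g, hgx⟩ ⟨v, hv.symm⟩ ⟨v, hv.symm⟩).2 hg.1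
  rw [opair_smul_iff] at h1
  have h2 := fin4_fix _ _ _ (e ⟨v, hv.symm⟩).2 h1.1 h1.2
  have h3 : φ ⟨g, hgx⟩ ^ m = 1 := by
    rw [← map_pow]
    have : (⟨g, hgx⟩ : stabilizer G x) ^ m = 1 := Subtype.ext (by simpa using hgm)
    rw [this, map_one]
  have h4 : φ ⟨g, hgx⟩ = 1 := by
    rw [← orderOf_eq_one_iff]
    have d1 := orderOf_dvd_of_pow_eq_one h2
    have d2 := orderOf_dvd_of_pow_eq_one h3
    have hc : Nat.Coprime 2 m := (Nat.Prime.coprime_iff_not_dvd Nat.prime_two).2 hm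
    exact Nat.eq_one_of_dvd_coprimes hc d1 d2
  exact (h.ker hconn (by norm_num) _).1 h4

lemma four_case [Finite V] (hconn : Γ.Connected)
    (hl : ∀ x : V, ∃ (e : Γ.neighborSet x ≃ OPairs 4)
      (φ : MulAction.stabilizer G x →* Equiv.Perm (Fin 4)), LD 4 Γ G x e φ) (x : V)
    (R : Subgroup G) (hR : R ≤ ballStab Γ G x 1) : IsPGroup 2 R := by
  rintro ⟨g, hg⟩
  obtain ⟨k, m, hm, hkm⟩ := Nat.exists_eq_pow_mul_and_not_dvd (orderOf_pos g).ne' 2 (by norm_num)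
  have hgm : (g ^ 2 ^ k) ^ m = 1 := by rw [← pow_mul, ← hkm, pow_orderOf_eq_one]
  refine ⟨k, Subtype.ext ?_⟩
  have hall : ∀ v, g ^ 2 ^ k ∈ ballStab Γ G v 1 := by
    refine conn_ind hconn _ (x := x) (pow_mem (hR hg) _) ?_
    intro v w hv hvw
    obtain ⟨e, φ, h⟩ := hl w
    exact ball_step hconn h hvw hv hm hgm
  show g ^ 2 ^ k = 1
  apply Subtype.ext
  apply Equiv.ext
  intro v
  exact ((mem_ball hconn).1 (hall v)).1

lemma main_ge5 [Finite V] (hconn : Γ.Connected) (hp : PreservesAdj Γ G) (hn : 5 ≤ n)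
    (h : LD n Γ G x e φ) {y : V} (hxy : Γ.Adj x y) {t : G} (hx : t • x = y) (hy : t • y = x)
    (hne : Rk (ballStab Γ G x 1) t ≠ ⊥) : n = 6 ∧ IsPGroup 2 (Rk (ballStab Γ G x 1) t) := by
  have am := graph_amal hconn hp hn h hxy hx hy
  obtain ⟨p, hpp, hOp⟩ := am.exists_p hne
  have hRp := am.R_pgroup hpp hOp
  have hnle := am.Op1_not_le hOp
  have hTN := am.Op1_TN (p := p)
  set P1 := cj t (Op p (ballStab Γ G x 1)) with hP1
  have hP1T : P1 ≤ stabilizer G x ⊓ stabilizer G y :=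
    (cj_mono (Op_spec p _).1).trans am.T1T
  have hP1X : P1 ≤ stabilizer G x := hP1T.trans inf_le_left
  have hP1p : IsPGroup p P1 := isPGroup_cj _ (Op_spec p _).2.2
  let N := (P1.subgroupOf (stabilizer G x)).map φ
  have hdis : (n = 5 ∧ p = 3) ∨ (n = 6 ∧ p = 2) := by
    refine stab_pgroup (N := N) hn hpp (e ⟨y, hxy⟩).2 ?_ ?_ ?_ ?_
    · rintro _ ⟨u, hu, rfl⟩
      have h1 := (h.smul_iff u ⟨y, hxy⟩ ⟨y, hxy⟩).2 (Subgroup.mem_inf.1 (hP1T hu)).2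
      exact (opair_smul_iff _ _ _).1 h1
    · rintro s hs1 hs2 _ ⟨u, hu, rfl⟩
      obtain ⟨k, rfl⟩ := h.surj s
      have h1 := (h.smul_iff k ⟨y, hxy⟩ ⟨y, hxy⟩).1 ((opair_smul_iff _ _ _).2 ⟨hs1, hs2⟩)
      refine ⟨k * u * k⁻¹, ?_, by simp⟩
      exact le_nz.1 hTN k.1 (Subgroup.mem_inf.2 ⟨k.2, h1⟩) u.1 hu
    · intro hb
      apply hnle
      intro m hm
      have h1 : φ ⟨m, hP1X hm⟩ ∈ N := ⟨⟨m, hP1X hm⟩, hm, rfl⟩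
      rw [hb, Subgroup.mem_bot] at h1
      exact (h.ker hconn (by omega) _).1 h1
    · apply IsPGroup.map
      exact hP1p.comap_of_injective _ (Subgroup.subtype_injective _)
  rcases hdis with ⟨rfl, rfl⟩ | ⟨rfl, rfl⟩
  · exact absurd (am.five φ h.surj (h.ker hconn (by norm_num)) hRp) hne
  · exact ⟨rfl, hRp⟩

end graph

/-- if `(Γ,G)` is locally `L` for `L` the group induced by `Sym(n)` on
ordered pairs of distinct elements (`n ≥ 4`) and `G_{xy}^{[1]} ≠ 1` for an edge `{x,y}`,
then `n = 4` or `n = 6`, and `G_{xy}^{[1]}` is a `2`-group. -/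
theorem stmt_9 {V : Type*} [Fintype V] (n : ℕ) (hn : 4 ≤ n)
    (Γ : SimpleGraph V) (hconn : Γ.Connected)
    (G : Subgroup (Equiv.Perm V)) (hloc : IsLocallyOPairs n Γ G)
    (x y : V) (hxy : Γ.Adj x y)
    (hne : ballStab Γ G x 1 ⊓ ballStab Γ G y 1 ≠ ⊥) :
    (n = 4 ∨ n = 6) ∧ IsPGroup 2 ↥(ballStab Γ G x 1 ⊓ ballStab Γ G y 1) := by
  obtain ⟨hp, htr, hl⟩ := hloc
  have hl' : ∀ x : V, ∃ (e : Γ.neighborSet x ≃ OPairs n)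
      (φ : MulAction.stabilizer G x →* Equiv.Perm (Fin n)), LD n Γ G x e φ := by
    intro x
    obtain ⟨e, φ, h1, h2⟩ := hl x
    exact ⟨e, φ, h1, h2⟩
  rcases Nat.eq_or_lt_of_le hn with h4 | h5
  · subst h4
    exact ⟨Or.inl rfl, four_case hconn hl' x _ inf_le_left⟩
  · obtain ⟨e, φ, h⟩ := hl' x
    obtain ⟨e', φ', h'⟩ := hl' y
    obtain ⟨t, hx, hy⟩ := exists_flip hp htr h' hxy
    have hR : ballStab Γ G x 1 ⊓ ballStab Γ G y 1 = Rk (ballStab Γ G x 1) t := by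
      unfold Rk
      rw [cj_ball hconn hp, hx]
    rw [hR] at hne ⊢
    have := main_ge5 hconn hp h5 h hxy hx hy hne
    exact ⟨Or.inr this.1, this.2⟩
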